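/- Let ε ∈ (0,1), let v^{(j)} ∈ ℝ^{n_j} for j = 1,…,d, and suppose each A^{(j)} ∈ ℝ^{m_j × n_j} is an ε-JL embedding of the singleton set {v^{(j)}}. Let X = v^{(1)} ∘ ⋯ ∘ v^{(d)} and X̂ = X ×₁ A^{(1)} ×₂ ⋯ ×_d A^{(d)}. Then (1 − ε)^d ‖X‖² ≤ ‖X̂‖² ≤ (1 + ε)^d ‖X‖². -/

import Mathlib

/-! The `j`-mode product of an outer product replaces its `j`-th factor `v⁽ʲ⁾` by `A⁽ʲ⁾ v⁽ʲ⁾`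
(`modeProd_outer`), so the successive mode products, each mode being visited once, turn
`v⁽¹⁾ ∘ ⋯ ∘ v⁽ᵈ⁾` into `A⁽¹⁾v⁽¹⁾ ∘ ⋯ ∘ A⁽ᵈ⁾v⁽ᵈ⁾` (`multiProd_outer`). The squared norm of an outer
product is the product of the squared norms of its factors (`innerT_outer`), hence multiplying
the `d` bounds `(1 - ε)‖v⁽ʲ⁾‖² ≤ ‖A⁽ʲ⁾v⁽ʲ⁾‖² ≤ (1 + ε)‖v⁽ʲ⁾‖²` gives the claim. -/

open Finset

/-- The `j`-mode product of a real `d`-mode tensor (encoded as a function on index tuples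
`Fin d → ℕ`, with mode `j` ranging over `[n]`) with a matrix `A` (encoded as `ℕ → ℕ → ℝ`). -/
noncomputable def modeProd {d : ℕ} (n : ℕ) (j : Fin d) (A : ℕ → ℕ → ℝ)
    (X : (Fin d → ℕ) → ℝ) : (Fin d → ℕ) → ℝ :=
  fun ℓ => ∑ i ∈ Finset.range n, A (ℓ j) i * X (Function.update ℓ j i)

/-- The successive mode products `X ×₁ A⁽¹⁾ ×₂ A⁽²⁾ ⋯ ×_d A⁽ᵈ⁾`. -/
noncomputable def multiProd {d : ℕ} (n : Fin d → ℕ) (A : Fin d → ℕ → ℕ → ℝ)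
    (X : (Fin d → ℕ) → ℝ) : (Fin d → ℕ) → ℝ :=
  (List.finRange d).foldl (fun Y j => modeProd (n j) j (A j) Y) X

/-- The inner product of two real `d`-mode tensors of size `n₁ × ⋯ × n_d`:
`⟨X,Y⟩ = ∑_{i₁,…,i_d} X_{i₁…i_d} Y_{i₁…i_d}`; `‖X‖² = ⟨X,X⟩`. -/
noncomputable def innerT {d : ℕ} (n : Fin d → ℕ) (X Y : (Fin d → ℕ) → ℝ) : ℝ :=
  ∑ i ∈ Fintype.piFinset (fun j : Fin d => Finset.range (n j)), X i * Y i

/-- The outer product `v⁽¹⁾ ∘ ⋯ ∘ v⁽ᵈ⁾` of vectors `v⁽ʲ⁾ ∈ ℝ^{n_j}`. -/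
noncomputable def outer {d : ℕ} (v : (j : Fin d) → ℕ → ℝ) : (Fin d → ℕ) → ℝ :=
  fun i => ∏ j : Fin d, v j (i j)

/-- `A ∈ ℝ^{mdim × ndim}` (encoded as `ℕ → ℕ → ℝ`) satisfies the `ε`-JL property
`|‖Ax‖₂² − ‖x‖₂²| ≤ ε ‖x‖₂²` for the vector `x ∈ ℝ^{ndim}`. -/
def IsJLVec (mdim ndim : ℕ) (A : ℕ → ℕ → ℝ) (ε : ℝ) (x : ℕ → ℝ) : Prop :=
  |(∑ ℓ ∈ Finset.range mdim, (∑ i ∈ Finset.range ndim, A ℓ i * x i) ^ 2)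
      - ∑ i ∈ Finset.range ndim, x i ^ 2| ≤ ε * ∑ i ∈ Finset.range ndim, x i ^ 2

/-- The matrix-vector product `A x`, in the encoding of matrices by `ℕ → ℕ → ℝ` with columns
indexed by `range n`. -/
noncomputable def matVec (n : ℕ) (A : ℕ → ℕ → ℝ) (x : ℕ → ℝ) : ℕ → ℝ :=
  fun l => ∑ i ∈ Finset.range n, A l i * x i

theorem innerT_outer {d : ℕ} (n : Fin d → ℕ) (v : (j : Fin d) → ℕ → ℝ) :
    innerT n (outer v) (outer v) = ∏ j, ∑ i ∈ Finset.range (n j), v j i ^ 2 := by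
  rw [Finset.prod_univ_sum]
  simp only [innerT, outer, ← Finset.prod_mul_distrib, sq]

theorem modeProd_outer {d : ℕ} (n : ℕ) (j : Fin d) (A : ℕ → ℕ → ℝ)
    (v : (j : Fin d) → ℕ → ℝ) :
    modeProd n j A (outer v) = outer (Function.update v j (matVec n A (v j))) := by
  funext l
  simp only [modeProd, outer]
  rw [← Finset.mul_prod_erase Finset.univ _ (Finset.mem_univ j)]
  simp only [Function.update_self, matVec, Finset.sum_mul]
  refine Finset.sum_congr rfl fun i _ => ?_
  rw [← Finset.mul_prod_erase Finset.univ _ (Finset.mem_univ j), Function.update_self, mul_assoc]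
  congr 2
  refine Finset.prod_congr rfl fun k hk => ?_
  rw [Function.update_of_ne (Finset.ne_of_mem_erase hk),
    Function.update_of_ne (Finset.ne_of_mem_erase hk)]

/-- Mode products along a duplicate-free list of modes transform exactly the listed factors;
without `Nodup` a factor could be multiplied more than once. -/
theorem foldl_modeProd_outer {d : ℕ} (n : Fin d → ℕ) (A : Fin d → ℕ → ℕ → ℝ)
    (L : List (Fin d)) (hL : L.Nodup) (v : (j : Fin d) → ℕ → ℝ) :
    L.foldl (fun Y j => modeProd (n j) j (A j) Y) (outer v)
      = outer (fun j => if j ∈ L then matVec (n j) (A j) (v j) else v j) := by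
  induction L generalizing v with
  | nil => simp
  | cons a L ih =>
    obtain ⟨ha, hL⟩ := List.nodup_cons.mp hL
    rw [List.foldl_cons, modeProd_outer, ih hL]
    congr 1
    funext j
    by_cases hj : j = a
    · subst hj
      simp [ha]
    · simp [hj]

theorem multiProd_outer {d : ℕ} (n : Fin d → ℕ) (A : Fin d → ℕ → ℕ → ℝ)
    (v : (j : Fin d) → ℕ → ℝ) :
    multiProd n A (outer v) = outer (fun j => matVec (n j) (A j) (v j)) := by
  simp [multiProd, foldl_modeProd_outer n A _ (List.nodup_finRange d) v]

/-- if each `A⁽ʲ⁾ ∈ ℝ^{m_j × n_j}` is an `ε`-JL embedding of `{v⁽ʲ⁾}`, with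
`ε ∈ (0,1)`, then for `X = v⁽¹⁾ ∘ ⋯ ∘ v⁽ᵈ⁾` and `X̂ = X ×₁ A⁽¹⁾ ×₂ ⋯ ×_d A⁽ᵈ⁾`:
`(1 − ε)^d ‖X‖² ≤ ‖X̂‖² ≤ (1 + ε)^d ‖X‖²`. -/
theorem stmt_7 {d : ℕ} (n m : Fin d → ℕ) (ε : ℝ) (hε0 : 0 < ε) (hε1 : ε < 1)
    (v : (j : Fin d) → ℕ → ℝ) (A : Fin d → ℕ → ℕ → ℝ)
    (hA : ∀ j : Fin d, IsJLVec (m j) (n j) (A j) ε (v j)) :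
    (1 - ε) ^ d * innerT n (outer v) (outer v)
        ≤ innerT m (multiProd n A (outer v)) (multiProd n A (outer v)) ∧
      innerT m (multiProd n A (outer v)) (multiProd n A (outer v))
        ≤ (1 + ε) ^ d * innerT n (outer v) (outer v) := by
  have pow_mul_prod : ∀ c : ℝ, c ^ d * ∏ j, ∑ i ∈ Finset.range (n j), v j i ^ 2
      = ∏ j, c * ∑ i ∈ Finset.range (n j), v j i ^ 2 := fun c => by
    simp [Finset.prod_mul_distrib]
  have bounds := fun j => abs_le.mp (hA j)
  have norm_nonneg : ∀ j, 0 ≤ ∑ i ∈ Finset.range (n j), v j i ^ 2 :=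
    fun j => Finset.sum_nonneg fun i _ => sq_nonneg _
  rw [multiProd_outer, innerT_outer, innerT_outer, pow_mul_prod, pow_mul_prod]
  constructor
  · refine Finset.prod_le_prod (fun j _ => mul_nonneg (by linarith) (norm_nonneg j))
      fun j _ => ?_
    simp only [matVec]
    linarith [(bounds j).1]
  · refine Finset.prod_le_prod (fun j _ => Finset.sum_nonneg fun l _ => sq_nonneg _)
      fun j _ => ?_
    simp only [matVec]
    linarith [(bounds j).2]
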